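/- arXiv:2408.13713 — 3 statements merged into one kernel-verified Lean document; each statement's English description precedes it below -/
import Mathlib

section
/- As an identity of 2×2 complex matrices, (1/16) · Σ_{s₀=0}^{1} Σ_{k=0}^{7} (Z^{s₀} · R_Z(kπ/4)) · |+⟩⟨+| · (Z^{s₀} · R_Z(kπ/4))ᴴ = (1/2) • 1, where |+⟩⟨+| = (1/2)•!![1,1;1,1] and 1 is the identity matrix. -/
open Matrix Kronecker Complex

noncomputable section

/-- Pauli X -/
def X2 : Matrix (Fin 2) (Fin 2) ℂ := !![0, 1; 1, 0]

/-- Pauli Z -/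
def Z2 : Matrix (Fin 2) (Fin 2) ℂ := !![1, 0; 0, -1]

/-- Hadamard -/
def H2 : Matrix (Fin 2) (Fin 2) ℂ := (1 / (Real.sqrt 2 : ℂ)) • !![1, 1; 1, -1]

/-- Z-rotation R_Z(φ) -/
def RZ (φ : ℝ) : Matrix (Fin 2) (Fin 2) ℂ :=
  !![Complex.exp (-(Complex.I * φ / 2)), 0; 0, Complex.exp (Complex.I * φ / 2)]

/-- standard basis vector of ℂ² -/
def e (i : Fin 2) : Fin 2 → ℂ := fun j => if j = i then 1 else 0

/-- Kronecker (tensor) product of two qubit state vectors -/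
def tensorVec (a b : Fin 2 → ℂ) : Fin 2 × Fin 2 → ℂ := fun p => a p.1 * b p.2

/-- partial contraction (vᴴ ⊗ I) : ℂ⁴ → ℂ², (vᴴ ⊗ I)(a ⊗ₖ b) = ⟨v,a⟩ • b -/
def contractL (v : Fin 2 → ℂ) (u : Fin 2 × Fin 2 → ℂ) : Fin 2 → ℂ :=
  fun j => ∑ i, (starRingEnd ℂ) (v i) * u (i, j)

/-- partial contraction (I ⊗ wᴴ) : ℂ⁴ → ℂ², (I ⊗ wᴴ)(a ⊗ₖ b) = ⟨w,b⟩ • a -/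
def contractR (w : Fin 2 → ℂ) (u : Fin 2 × Fin 2 → ℂ) : Fin 2 → ℂ :=
  fun i => ∑ j, (starRingEnd ℂ) (w j) * u (i, j)

/-- controlled-NOT with the first factor as control -/
def CX : Matrix (Fin 2 × Fin 2) (Fin 2 × Fin 2) ℂ :=
  fun p q => if p.1 = q.1 ∧ p.2 = q.1 + q.2 then 1 else 0

/-!
Summing over `s₀` alone dephases a state: conjugation by `Z` flips the sign of the off-diagonal
entries, so they cancel against those of the unconjugated state. The rotation `R_Z(φ)` is diagonal
with unimodular entries, so conjugation by it leaves the diagonal alone, whatever the angle. As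
`|+⟩⟨+|` has constant diagonal `1/2`, what remains is `I/2`.
-/

theorem diag_diagonal_mul_mul_conjTranspose {n R : Type*} [Fintype n] [DecidableEq n]
    [CommSemiring R] [StarRing R] {d : n → R} (hd : ∀ i, d i * star (d i) = 1)
    (A : Matrix n n R) : diag (diagonal d * A * (diagonal d)ᴴ) = diag A := by
  ext i
  simp only [diagonal_conjTranspose, diag_apply, mul_diagonal, diagonal_mul, Pi.star_apply]
  rw [mul_right_comm, hd, one_mul]

theorem RZ_eq_diagonal (φ : ℝ) :
    RZ φ = diagonal ![exp (-(I * φ / 2)), exp (I * φ / 2)] := by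
  rw [RZ, diagonal_fin_two]
  rfl

theorem diag_RZ_mul_mul_conjTranspose (φ : ℝ) (A : Matrix (Fin 2) (Fin 2) ℂ) :
    diag (RZ φ * A * (RZ φ)ᴴ) = diag A := by
  rw [RZ_eq_diagonal]
  refine diag_diagonal_mul_mul_conjTranspose (fun i => ?_) A
  rw [star_def, mul_conj']
  fin_cases i <;> simp [norm_exp]

theorem Z2_eq_diagonal : Z2 = diagonal ![1, -1] := by
  rw [Z2, diagonal_fin_two]
  rfl

theorem sum_Z2_pow_mul_mul_conjTranspose (A : Matrix (Fin 2) (Fin 2) ℂ) :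
    ∑ s ∈ Finset.range 2, Z2 ^ s * A * (Z2 ^ s)ᴴ = (2 : ℂ) • diagonal (diag A) := by
  have conj_Z2 : Z2 * A * Z2ᴴ = !![A 0 0, -A 0 1; -A 1 0, A 1 1] := by
    rw [Z2_eq_diagonal, diagonal_conjTranspose]
    ext i j
    fin_cases i <;> fin_cases j <;> simp [mul_diagonal, diagonal_mul]
  rw [Finset.sum_range_succ, Finset.sum_range_one, pow_zero, pow_one, one_mul,
    conjTranspose_one, mul_one, conj_Z2]
  ext i j
  fin_cases i <;> fin_cases j <;> simp [two_mul]

theorem sum_Z2_pow_mul_RZ_mul_mul_conjTranspose (φ : ℝ) (ρ : Matrix (Fin 2) (Fin 2) ℂ) :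
    ∑ s ∈ Finset.range 2, (Z2 ^ s * RZ φ) * ρ * (Z2 ^ s * RZ φ)ᴴ =
      (2 : ℂ) • diagonal (diag ρ) := by
  calc ∑ s ∈ Finset.range 2, (Z2 ^ s * RZ φ) * ρ * (Z2 ^ s * RZ φ)ᴴ
      = ∑ s ∈ Finset.range 2, Z2 ^ s * (RZ φ * ρ * (RZ φ)ᴴ) * (Z2 ^ s)ᴴ := by
        simp only [conjTranspose_mul, Matrix.mul_assoc]
    _ = (2 : ℂ) • diagonal (diag ρ) := by
        rw [sum_Z2_pow_mul_mul_conjTranspose, diag_RZ_mul_mul_conjTranspose]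

theorem diagonal_diag_plus_projection :
    diagonal (diag ((1 / 2 : ℂ) • !![1, 1; 1, 1])) =
      (1 / 2 : ℂ) • (1 : Matrix (Fin 2) (Fin 2) ℂ) := by
  rw [smul_one_eq_diagonal]
  congr 1
  ext i
  fin_cases i <;> simp

theorem input_blindness_general {ι : Type*} {K : Finset ι} (hK : K.Nonempty) (θ : ι → ℝ)
    (ρ : Matrix (Fin 2) (Fin 2) ℂ) :
    (1 / (2 * K.card) : ℂ) •
      ∑ s₀ ∈ Finset.range 2, ∑ k ∈ K, (Z2 ^ s₀ * RZ (θ k)) * ρ * (Z2 ^ s₀ * RZ (θ k))ᴴ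
    = diagonal (diag ρ) := by
  have card_ne_zero : (K.card : ℂ) ≠ 0 := Nat.cast_ne_zero.mpr hK.card_ne_zero
  rw [Finset.sum_comm]
  simp only [sum_Z2_pow_mul_RZ_mul_mul_conjTranspose]
  rw [Finset.sum_const, ← Nat.cast_smul_eq_nsmul ℂ, smul_smul, smul_smul, mul_assoc,
    mul_comm (K.card : ℂ), one_div_mul_cancel (mul_ne_zero two_ne_zero card_ne_zero), one_smul]

/-- Eq. (12), input blindness: averaging Z^{s₀} R_Z(kπ/4) |+⟩⟨+| (Z^{s₀} R_Z(kπ/4))ᴴ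
over s₀ ∈ {0,1} and k ∈ {0,…,7} gives the maximally mixed state I/2. -/
theorem input_blindness :
    (1 / 16 : ℂ) •
      ∑ s₀ ∈ Finset.range 2, ∑ k ∈ Finset.range 8,
        (Z2 ^ s₀ * RZ ((k : ℝ) * Real.pi / 4)) * ((1 / 2 : ℂ) • !![1, 1; 1, 1]) *
          (Z2 ^ s₀ * RZ ((k : ℝ) * Real.pi / 4))ᴴ
    = (1 / 2 : ℂ) • (1 : Matrix (Fin 2) (Fin 2) ℂ) := by
  rw [← diagonal_diag_plus_projection,
    ← input_blindness_general (K := Finset.range 8) ⟨0, by simp⟩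
    (fun k => (k : ℝ) * Real.pi / 4), Finset.card_range]
  norm_num
end
end

section
/- Let ψ ∈ ℂ², φ' : ℝ, and s₃ ∈ {0, 1}. Let w = (e₀ + (-1)^{s₃} · exp(I·φ') · e₁)/√2 ∈ ℂ². Then applying the partial contraction (I ⊗ wᴴ) to the vector (H ⊗ₖ 1) · CX · (ψ ⊗ₖ e₀) ∈ ℂ⁴ yields (exp(-I·φ'/2)/√2) • (X^{s₃} · H · R_Z(-φ')) ψ. -/
open Matrix Kronecker Complex

noncomputable section

/-!
Copying the register onto an ancilla in state `e₀` by `CX` and then contracting the ancilla with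
`w` acts on the register as `diagonal (star w)`. For a vector of the `M(φ)` basis this diagonal
matrix is `Z ^ s * R_Z(-φ)` up to a scalar, and `H` turns the byproduct `Z ^ s` into `X ^ s`.
-/

theorem contractR_kronecker_one_mulVec (w : Fin 2 → ℂ) (A : Matrix (Fin 2) (Fin 2) ℂ)
    (u : Fin 2 × Fin 2 → ℂ) :
    contractR w ((A ⊗ₖ (1 : Matrix (Fin 2) (Fin 2) ℂ)) *ᵥ u) = A *ᵥ contractR w u := by
  ext i
  simp only [contractR, mulVec, dotProduct, Fintype.sum_prod_type, kroneckerMap_apply, one_apply,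
    mul_ite, mul_one, mul_zero, ite_mul, zero_mul, Finset.sum_ite_eq, Finset.mem_univ, if_true,
    Finset.mul_sum]
  rw [Finset.sum_comm]
  simp only [mul_left_comm]

theorem CX_mulVec_apply (u : Fin 2 × Fin 2 → ℂ) (i j : Fin 2) :
    (CX *ᵥ u) (i, j) = u (i, j - i) := by
  have CX_row (q : Fin 2 × Fin 2) : CX (i, j) q = if (i, j - i) = q then 1 else 0 := by
    refine if_congr ?_ rfl rfl
    rw [Prod.ext_iff]
    refine and_congr_right fun (hi : i = q.1) => ?_
    rw [← hi, sub_eq_iff_eq_add']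
  simp [mulVec, dotProduct, CX_row]

theorem contractR_CX_mulVec_tensorVec_e_zero (w ψ : Fin 2 → ℂ) :
    contractR w (CX *ᵥ tensorVec ψ (e 0)) = diagonal (star w) *ᵥ ψ := by
  ext i
  simp [contractR, CX_mulVec_apply, tensorVec, e, sub_eq_zero, mulVec_diagonal]

theorem semiconjBy_H2_Z2_X2 : SemiconjBy H2 Z2 X2 := by
  simp [SemiconjBy, H2, Z2, X2]

theorem Z2_pow (n : ℕ) : Z2 ^ n = diagonal ![1, (-1) ^ n] := by
  have Z2_eq_diagonal : Z2 = diagonal ![1, -1] := by simp [Z2, diagonal_fin_two]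
  rw [Z2_eq_diagonal, diagonal_pow]
  congr 1
  ext i
  fin_cases i <;> simp

theorem exp_smul_RZ (φ : ℝ) : exp (I * φ / 2) • RZ φ = diagonal ![1, exp (I * φ)] := by
  simp [RZ, diagonal_fin_two, ← exp_add]

/-- The vector with outcome `s` of the measurement basis `M(φ)`. The outcome enters only through
the sign `(-1) ^ s`, so any natural number is allowed and only its parity matters. -/
def measurementVec (φ : ℝ) (s : ℕ) : Fin 2 → ℂ :=
  (1 / (Real.sqrt 2 : ℂ)) • (e 0 + ((-1 : ℂ) ^ s * exp (I * φ)) • e 1)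

theorem diagonal_star_measurementVec (φ : ℝ) (s : ℕ) :
    diagonal (star (measurementVec φ s)) =
      (exp (-(I * φ / 2)) / (Real.sqrt 2 : ℂ)) • (Z2 ^ s * RZ (-φ)) := by
  have star_measurementVec : star (measurementVec φ s) =
      (1 / (Real.sqrt 2 : ℂ)) • ![1, (-1) ^ s * exp (-(I * φ))] := by
    ext i
    fin_cases i <;> simp [measurementVec, e, ← exp_conj]
  have exp_smul_RZ_neg : exp (-(I * φ / 2)) • RZ (-φ) = diagonal ![1, exp (-(I * φ))] := by
    simpa [neg_div] using exp_smul_RZ (-φ)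
  calc diagonal (star (measurementVec φ s))
      = (1 / (Real.sqrt 2 : ℂ)) • (diagonal ![1, (-1) ^ s] * diagonal ![1, exp (-(I * φ))]) := by
        rw [star_measurementVec, diagonal_smul]
        simp [diagonal_fin_two]
    _ = (1 / (Real.sqrt 2 : ℂ)) • (Z2 ^ s * exp (-(I * φ / 2)) • RZ (-φ)) := by
        rw [Z2_pow, exp_smul_RZ_neg]
    _ = (exp (-(I * φ / 2)) / (Real.sqrt 2 : ℂ)) • (Z2 ^ s * RZ (-φ)) := by
        rw [Matrix.mul_smul, smul_smul, one_div_mul_eq_div]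

theorem last_coupling_step_general (ψ : Fin 2 → ℂ) (φ : ℝ) (s : ℕ) :
    contractR (measurementVec φ s)
      (((H2 ⊗ₖ (1 : Matrix (Fin 2) (Fin 2) ℂ)) * CX) *ᵥ tensorVec ψ (e 0)) =
    (exp (-(I * φ / 2)) / (Real.sqrt 2 : ℂ)) • (X2 ^ s * H2 * RZ (-φ)) *ᵥ ψ := by
  have H2_mul_Z2_pow : H2 * Z2 ^ s = X2 ^ s * H2 := semiconjBy_H2_Z2_X2.pow_right s
  calc contractR (measurementVec φ s)
        (((H2 ⊗ₖ (1 : Matrix (Fin 2) (Fin 2) ℂ)) * CX) *ᵥ tensorVec ψ (e 0))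
      = H2 *ᵥ diagonal (star (measurementVec φ s)) *ᵥ ψ := by
        rw [← mulVec_mulVec, contractR_kronecker_one_mulVec,
          contractR_CX_mulVec_tensorVec_e_zero]
    _ = (exp (-(I * φ / 2)) / (Real.sqrt 2 : ℂ)) • (H2 * Z2 ^ s * RZ (-φ)) *ᵥ ψ := by
        rw [diagonal_star_measurementVec, mulVec_mulVec, Matrix.mul_smul, ← Matrix.mul_assoc,
          smul_mulVec]
    _ = (exp (-(I * φ / 2)) / (Real.sqrt 2 : ℂ)) • (X2 ^ s * H2 * RZ (-φ)) *ᵥ ψ := by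
        rw [H2_mul_Z2_pow]

/-- Eqs. (17)–(18): coupling the register ψ with an ancilla in state e₀ via
(H ⊗ 1)·CX and projecting the ancilla onto the M(φ') basis element with outcome
s₃ leaves the register in X^{s₃} H R_Z(-φ') ψ, up to global phase exp(-Iφ'/2)
and normalization 1/√2. -/
theorem last_coupling_step (ψ : Fin 2 → ℂ) (φ' : ℝ) (s₃ : ℕ) (hs₃ : s₃ ≤ 1) :
    contractR
      ((1 / (Real.sqrt 2 : ℂ)) •
        (e 0 + ((-1 : ℂ) ^ s₃ * Complex.exp (Complex.I * φ')) • e 1))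
      (((H2 ⊗ₖ (1 : Matrix (Fin 2) (Fin 2) ℂ)) * CX).mulVec (tensorVec ψ (e 0)))
    = (Complex.exp (-(Complex.I * φ' / 2)) / (Real.sqrt 2 : ℂ)) •
        (X2 ^ s₃ * H2 * RZ (-φ')).mulVec ψ :=
  last_coupling_step_general ψ φ' s₃
end
end

section
/- Let φ, θ : ℝ and s₁, s₃, r ∈ {0, 1}, and set φ' = -φ + (-1)^{s₁}·θ + r·π. Then the 2×2 matrix identity X^{s₃} · H · R_Z((-1)^{s₁}·θ - φ') = I^r • (X^{(s₃ + r) % 2} · H · R_Z(φ)) holds, where I = Complex.I is the imaginary unit acting as a global phase. -/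
open Matrix Kronecker Complex

noncomputable section

/-!
Shifting the angle of `R_Z` by `-rπ` multiplies it by `R_Z(-π) ^ r = i ^ r Z ^ r`. The Hadamard gate
turns `Z ^ r` into `X ^ r`, which merges with `X ^ s₃`; only the parity of the exponent matters
because `X ^ 2 = 1`.
-/

theorem X2_sq : X2 ^ 2 = 1 := by
  simp [X2, sq, Matrix.one_fin_two]

theorem RZ_zero : RZ 0 = 1 := by
  simp [RZ, Matrix.one_fin_two]

theorem RZ_add (α β : ℝ) : RZ (α + β) = RZ α * RZ β := by
  simp [RZ, mul_add, add_div, Complex.exp_add, mul_comm]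

theorem RZ_nat_mul (n : ℕ) (α : ℝ) : RZ (n * α) = RZ α ^ n := by
  induction n with
  | zero => simp [RZ_zero]
  | succ n ih => rw [Nat.cast_succ, add_one_mul, RZ_add, ih, pow_succ]

theorem RZ_neg_pi : RZ (-Real.pi) = Complex.I • Z2 := by
  have h_pos : -(Complex.I * ((-Real.pi : ℝ) : ℂ) / 2) = Real.pi / 2 * Complex.I := by
    push_cast; ring
  have h_neg : Complex.I * ((-Real.pi : ℝ) : ℂ) / 2 = -Real.pi / 2 * Complex.I := by
    push_cast; ring
  rw [RZ, h_pos, h_neg, Complex.exp_pi_div_two_mul_I, Complex.exp_neg_pi_div_two_mul_I]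
  simp [Z2]

theorem RZ_sub_nat_mul_pi (φ : ℝ) (n : ℕ) :
    RZ (φ - n * Real.pi) = Complex.I ^ n • (Z2 ^ n * RZ φ) := by
  calc RZ (φ - n * Real.pi) = RZ (n * -Real.pi + φ) := by congr 1; ring
    _ = (Complex.I • Z2) ^ n * RZ φ := by rw [RZ_add, RZ_nat_mul, RZ_neg_pi]
    _ = Complex.I ^ n • (Z2 ^ n * RZ φ) := by rw [smul_pow, smul_mul_assoc]

theorem X2_pow_mul_H2_mul_Z2_pow (m n : ℕ) :
    X2 ^ m * H2 * Z2 ^ n = X2 ^ ((m + n) % 2) * H2 := by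
  rw [mul_assoc, (semiconjBy_H2_Z2_X2.pow_right n).eq, ← mul_assoc, ← pow_add,
    pow_eq_pow_mod (m + n) X2_sq]

theorem angle_encryption_correct_general (φ α φ' : ℝ) (s₃ r : ℕ)
    (hφ' : φ' = -φ + α + (r : ℝ) * Real.pi) :
    X2 ^ s₃ * H2 * RZ (α - φ') = Complex.I ^ r • (X2 ^ ((s₃ + r) % 2) * H2 * RZ φ) := by
  have h_angle : α - φ' = φ - r * Real.pi := by rw [hφ']; ring
  rw [h_angle, RZ_sub_nat_mul_pi, mul_smul_comm, ← mul_assoc, X2_pow_mul_H2_mul_Z2_pow]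

/-- Eq. (19), correctness of the angle encryption: with
φ' = -φ + (-1)^{s₁}θ + rπ, the operation X^{s₃} H R_Z((-1)^{s₁}θ - φ') equals
J(φ) = H R_Z(φ) up to the Pauli byproduct X^{s₃⊕r} and a global phase i^r. -/
theorem angle_encryption_correct (φ θ : ℝ) (s₁ s₃ r : ℕ)
    (hs₁ : s₁ ≤ 1) (hs₃ : s₃ ≤ 1) (hr : r ≤ 1)
    (φ' : ℝ) (hφ' : φ' = -φ + (-1 : ℝ) ^ s₁ * θ + (r : ℝ) * Real.pi) :
    X2 ^ s₃ * H2 * RZ ((-1 : ℝ) ^ s₁ * θ - φ')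
      = Complex.I ^ r • (X2 ^ ((s₃ + r) % 2) * H2 * RZ φ) :=
  angle_encryption_correct_general φ _ φ' s₃ r hφ'
end
end
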